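/- arXiv:2408.04903 — 2 statements merged into one kernel-verified Lean document; each statement's English description precedes it below -/
import Mathlib

section
/- The explainer L_w satisfies Feasibility, Validity, Success, Coherence, Monotonicity, Counter-Monotonicity and Strong Completeness, and it violates Irreducibility, Strong Irreducibility and Completeness. -/
/-- A classification theory: a finite set of features, a finite domain (with at
least two values) for each feature, and a finite set of at least two classes. -/
structure CTheory where
  F : Finset ℕ
  dom : ℕ → Finset ℕ
  dom_nontrivial : ∀ f ∈ F, 1 < (dom f).card
  C : Finset ℕ
  C_nontrivial : 2 ≤ C.card

/-- A literal of a theory is a pair (feature, value) with the value in the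
feature's domain. -/
def IsLiteral (T : CTheory) (l : ℕ × ℕ) : Prop :=
  l.1 ∈ T.F ∧ l.2 ∈ T.dom l.1

/-- A set of literals is consistent iff no feature gets two distinct values. -/
def ConsistentLits (S : Set (ℕ × ℕ)) : Prop :=
  ∀ l ∈ S, ∀ l' ∈ S, l.1 = l'.1 → l.2 = l'.2

/-- A partial assignment: a consistent set of literals (each feature occurs at
most once). -/
def IsPartialAssignment (T : CTheory) (E : Set (ℕ × ℕ)) : Prop :=
  (∀ l ∈ E, IsLiteral T l) ∧ ConsistentLits E

/-- An instance: a partial assignment in which every feature occurs (exactly) once. -/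
def IsInstance (T : CTheory) (x : Set (ℕ × ℕ)) : Prop :=
  IsPartialAssignment T x ∧ ∀ f ∈ T.F, ∃ v, (f, v) ∈ x

/-- The feature space of a theory: the set of all its instances. -/
def FeatureSpace (T : CTheory) : Set (Set (ℕ × ℕ)) := {x | IsInstance T x}

/-- A classifier maps every instance to a class. -/
def IsClassifier (T : CTheory) (κ : Set (ℕ × ℕ) → ℕ) : Prop :=
  ∀ x ∈ FeatureSpace T, κ x ∈ T.C

/-- A question (T, κ, D, x): κ is a classifier on T, D ⊆ F(T) and x ∈ D. -/
def IsQuestion (T : CTheory) (κ : Set (ℕ × ℕ) → ℕ)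
    (D : Set (Set (ℕ × ℕ))) (x : Set (ℕ × ℕ)) : Prop :=
  IsClassifier T κ ∧ D ⊆ FeatureSpace T ∧ x ∈ D

/-- An explainer maps every question (T, κ, D, x) to a set of sets of literals. -/
abbrev Explainer :=
  CTheory → (Set (ℕ × ℕ) → ℕ) → Set (Set (ℕ × ℕ)) → Set (ℕ × ℕ) → Set (Set (ℕ × ℕ))

/-- An explainer returns, on every question over T, a subset of E(T)
(the partial assignments of T). -/
def IsExplainer (L : Explainer) : Prop :=
  ∀ T κ D x, IsQuestion T κ D x → ∀ E ∈ L T κ D x, IsPartialAssignment T E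

/-- Feasibility: every explanation is part of the instance being explained. -/
def Feasibility (L : Explainer) : Prop :=
  ∀ T κ D x, IsQuestion T κ D x → ∀ E ∈ L T κ D x, E ⊆ x

/-- Validity: no explanation is contradicted within the dataset. -/
def Validity (L : Explainer) : Prop :=
  ∀ T κ D x, IsQuestion T κ D x → ∀ E ∈ L T κ D x,
    ¬ ∃ y ∈ D, E ⊆ y ∧ κ y ≠ κ x

/-- Success: every question receives at least one explanation. -/
def Success (L : Explainer) : Prop :=
  ∀ T κ D x, IsQuestion T κ D x → (L T κ D x).Nonempty

/-- Coherence: explanations of instances with distinct classes are jointly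
inconsistent. -/
def Coherence (L : Explainer) : Prop :=
  ∀ T κ D x x', IsQuestion T κ D x → IsQuestion T κ D x' → κ x ≠ κ x' →
    ∀ E ∈ L T κ D x, ∀ E' ∈ L T κ D x', ¬ ConsistentLits (E ∪ E')

/-- Irreducibility: no literal of an explanation can be removed
(witnessed in the dataset). -/
def Irreducibility (L : Explainer) : Prop :=
  ∀ T κ D x, IsQuestion T κ D x → ∀ E ∈ L T κ D x, ∀ l ∈ E,
    ∃ x' ∈ D, κ x' ≠ κ x ∧ E \ {l} ⊆ x'

/-- Strong Irreducibility: no literal of an explanation can be removed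
(witnessed in the feature space). -/
def StrongIrreducibility (L : Explainer) : Prop :=
  ∀ T κ D x, IsQuestion T κ D x → ∀ E ∈ L T κ D x, ∀ l ∈ E,
    ∃ x' ∈ FeatureSpace T, κ x' ≠ κ x ∧ E \ {l} ⊆ x'

/-- Completeness: every omitted candidate is invalidated within the dataset. -/
def Completeness (L : Explainer) : Prop :=
  ∀ T κ D x, IsQuestion T κ D x → ∀ E ⊆ x, E ∉ L T κ D x →
    ∃ y ∈ D, E ⊆ y ∧ κ y ≠ κ x

/-- Strong Completeness: every omitted candidate is invalidated within the
feature space. -/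
def StrongCompleteness (L : Explainer) : Prop :=
  ∀ T κ D x, IsQuestion T κ D x → ∀ E ⊆ x, E ∉ L T κ D x →
    ∃ y ∈ FeatureSpace T, E ⊆ y ∧ κ y ≠ κ x

/-- Monotonicity: enlarging the dataset preserves explanations. -/
def Monotonicity (L : Explainer) : Prop :=
  ∀ T κ D D' x, IsQuestion T κ D x → IsQuestion T κ D' x → D ⊆ D' →
    L T κ D x ⊆ L T κ D' x

/-- Counter-Monotonicity: enlarging the dataset can only discard explanations. -/
def CounterMonotonicity (L : Explainer) : Prop :=
  ∀ T κ D D' x, IsQuestion T κ D x → IsQuestion T κ D' x → D ⊆ D' →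
    L T κ D' x ⊆ L T κ D x

/-- The explainer L_dw returning all weak abductive explanations (dwAXp's):
E ⊆ x and every y ∈ D containing E has the same class as x. -/
def Ldw : Explainer := fun _T κ D x =>
  {E | E ⊆ x ∧ ∀ y ∈ D, E ⊆ y → κ y = κ x}

/-- The explainer L_w returning the weak abductive explanations computed on the
whole feature space. -/
def Lw : Explainer := fun T κ _D x => Ldw T κ (FeatureSpace T) x

/-- The explainer L_dc returning the subset-minimal weak abductive explanations
(concise abductive explanations). -/
def Ldc : Explainer := fun T κ D x =>
  {E | E ∈ Ldw T κ D x ∧ ∀ E' ∈ Ldw T κ D x, E' ⊆ E → E' = E}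

/-- A set X of partial assignments is coherent under (D, κ): no two of its
members are consistent together while being contained in instances of D with
distinct classes. -/
def CoherentSet (κ : Set (ℕ × ℕ) → ℕ) (D : Set (Set (ℕ × ℕ)))
    (X : Set (Set (ℕ × ℕ))) : Prop :=
  ¬ ∃ E ∈ X, ∃ E' ∈ X, ConsistentLits (E ∪ E') ∧
      ∃ y ∈ D, ∃ z ∈ D, E ⊆ y ∧ E' ⊆ z ∧ κ y ≠ κ z

/-- An envelope under (D, κ): a coherent set of dwAXp's covering every instance
of D. -/
def IsEnvelope (T : CTheory) (κ : Set (ℕ × ℕ) → ℕ) (D : Set (Set (ℕ × ℕ)))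
    (X : Set (Set (ℕ × ℕ))) : Prop :=
  (∀ E ∈ X, IsPartialAssignment T E) ∧
  CoherentSet κ D X ∧
  (∀ E ∈ X, ∃ x ∈ D, E ∈ Ldw T κ D x) ∧
  (∀ x ∈ D, ∃ E ∈ X, E ⊆ x)

/-- W: the union of all dwAXp's of all instances of the dataset. -/
def dwUnion (T : CTheory) (κ : Set (ℕ × ℕ) → ℕ) (D : Set (Set (ℕ × ℕ))) :
    Set (Set (ℕ × ℕ)) :=
  {E | ∃ x ∈ D, E ∈ Ldw T κ D x}

/-- The two defining conditions of an irrefutable envelope (before maximality):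
a set of dwAXp's none of which conflicts with any dwAXp. -/
def IrrCandidate (T : CTheory) (κ : Set (ℕ × ℕ) → ℕ) (D : Set (Set (ℕ × ℕ)))
    (X : Set (Set (ℕ × ℕ))) : Prop :=
  X ⊆ dwUnion T κ D ∧
  ∀ E ∈ X, ¬ ∃ E' ∈ dwUnion T κ D, ¬ CoherentSet κ D {E, E'}

/-- An irrefutable envelope under (D, κ): a subset-maximal set of mutually
irrefutable dwAXp's. -/
def IsIrrefutableEnvelope (T : CTheory) (κ : Set (ℕ × ℕ) → ℕ)
    (D : Set (Set (ℕ × ℕ))) (X : Set (Set (ℕ × ℕ))) : Prop :=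
  IrrCandidate T κ D X ∧ ∀ X', IrrCandidate T κ D X' → ¬ X ⊂ X'

/-- A coherent explainer: on every question, it returns the members of a fixed
envelope (the union of its outputs over the dataset) included in the instance. -/
def IsCoherentExplainer (L : Explainer) : Prop :=
  ∀ T κ D x, IsQuestion T κ D x →
    L T κ D x = {E | (∃ z ∈ D, E ∈ L T κ D z) ∧ E ⊆ x} ∧
    IsEnvelope T κ D {E | ∃ z ∈ D, E ∈ L T κ D z}

/-! Coherence holds because two explanations that are consistent together extend to a common
instance, which would receive both classes. The violations come from degenerate questions. For a
constant classifier every subset of the instance is an explanation, so none of its literals is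
needed. On a dataset with a single instance nothing invalidates the empty set, so Completeness would
make it an explanation, which over the whole feature space forces the classifier to be constant. -/

section PartialAssignments

variable {T : CTheory} {E E' x : Set (ℕ × ℕ)}

lemma ConsistentLits.mono (hx : ConsistentLits x) (hEx : E ⊆ x) : ConsistentLits E :=
  fun l hl l' hl' => hx l (hEx hl) l' (hEx hl')

lemma IsPartialAssignment.mono (hx : IsPartialAssignment T x) (hEx : E ⊆ x) :
    IsPartialAssignment T E :=
  ⟨fun l hl => hx.1 l (hEx hl), hx.2.mono hEx⟩

lemma IsPartialAssignment.union (hE : IsPartialAssignment T E) (hE' : IsPartialAssignment T E')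
    (hcons : ConsistentLits (E ∪ E')) : IsPartialAssignment T (E ∪ E') :=
  ⟨fun l hl => hl.elim (hE.1 l) (hE'.1 l), hcons⟩

lemma IsInstance.eq_of_subset (hx : IsInstance T x) (hE : IsPartialAssignment T E)
    (hxE : x ⊆ E) : x = E := by
  refine hxE.antisymm ?_
  rintro ⟨f, v⟩ hv
  obtain ⟨w, hw⟩ := hx.2 f (hE.1 _ hv).1
  have hvw : v = w := hE.2 _ hv _ (hxE hw) rfl
  rwa [hvw]

/-- The instance of `T` giving each feature `f` the value `v f`. It is encoded as the graph of `v`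
over the features, so it is an instance only if `v f` lies in the domain of every feature `f`. -/
def instanceOfValues (T : CTheory) (v : ℕ → ℕ) : Set (ℕ × ℕ) :=
  {l | l.1 ∈ T.F ∧ l.2 = v l.1}

lemma isInstance_instanceOfValues {v : ℕ → ℕ} (hv : ∀ f ∈ T.F, v f ∈ T.dom f) :
    IsInstance T (instanceOfValues T v) := by
  refine ⟨⟨?_, ?_⟩, fun f hf => ⟨v f, hf, rfl⟩⟩
  · rintro l ⟨hf, hl⟩
    exact ⟨hf, hl ▸ hv l.1 hf⟩
  · rintro l ⟨-, hl⟩ l' ⟨-, hl'⟩ hfeature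
    rw [hl, hl', hfeature]

lemma IsPartialAssignment.exists_value (hE : IsPartialAssignment T E) {f : ℕ} (hf : f ∈ T.F) :
    ∃ v ∈ T.dom f, ∀ w, (f, w) ∈ E → w = v := by
  by_cases hocc : ∃ v, (f, v) ∈ E
  · obtain ⟨v, hv⟩ := hocc
    exact ⟨v, (hE.1 _ hv).2, fun w hw => hE.2 _ hw _ hv rfl⟩
  · obtain ⟨v, hv⟩ := Finset.card_pos.mp (zero_lt_one.trans (T.dom_nontrivial f hf))
    exact ⟨v, hv, fun w hw => (hocc ⟨w, hw⟩).elim⟩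

lemma IsPartialAssignment.exists_isInstance_superset (hE : IsPartialAssignment T E) :
    ∃ x, IsInstance T x ∧ E ⊆ x := by
  choose! v hvdom hvE using fun f (hf : f ∈ T.F) => hE.exists_value hf
  refine ⟨instanceOfValues T v, isInstance_instanceOfValues hvdom, ?_⟩
  rintro ⟨f, w⟩ hw
  have hf : f ∈ T.F := (hE.1 _ hw).1
  exact ⟨hf, hvE f hf w hw⟩

end PartialAssignments

section Questions

variable {T : CTheory} {κ : Set (ℕ × ℕ) → ℕ} {D : Set (Set (ℕ × ℕ))} {x : Set (ℕ × ℕ)}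

lemma IsQuestion.isInstance (hQ : IsQuestion T κ D x) : IsInstance T x :=
  hQ.2.1 hQ.2.2

lemma IsQuestion.featureSpace (hQ : IsQuestion T κ D x) : IsQuestion T κ (FeatureSpace T) x :=
  ⟨hQ.1, subset_rfl, hQ.isInstance⟩

lemma IsClassifier.isQuestion_singleton (hκ : IsClassifier T κ) (hx : IsInstance T x) :
    IsQuestion T κ {x} x :=
  ⟨hκ, Set.singleton_subset_iff.mpr hx, rfl⟩

lemma exists_isClassifier_const (T : CTheory) : ∃ c, IsClassifier T (fun _ => c) := by
  obtain ⟨c, hc⟩ := Finset.card_pos.mp (two_pos.trans_le T.C_nontrivial)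
  exact ⟨c, fun _ _ => hc⟩

open Classical in
lemma exists_isClassifier_ne (T : CTheory) {x y : Set (ℕ × ℕ)} (hxy : x ≠ y) :
    ∃ κ, IsClassifier T κ ∧ κ x ≠ κ y := by
  obtain ⟨c, hc, d, hd, hcd⟩ := Finset.one_lt_card.mp T.C_nontrivial
  refine ⟨fun z => if z = x then c else d, fun z _ => ?_, ?_⟩
  · dsimp only
    split_ifs <;> assumption
  · simpa [hxy.symm] using hcd

end Questions

lemma Irreducibility.strongIrreducibility {L : Explainer} (hL : Irreducibility L) :
    StrongIrreducibility L := by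
  intro T κ D x hQ E hE l hl
  obtain ⟨x', hx', hne, hsub⟩ := hL T κ D x hQ E hE l hl
  exact ⟨x', hQ.2.1 hx', hne, hsub⟩

lemma Completeness.mem_of_dataset_singleton {L : Explainer} (hL : Completeness L) {T : CTheory}
    {κ : Set (ℕ × ℕ) → ℕ} {x E : Set (ℕ × ℕ)} (hQ : IsQuestion T κ {x} x) (hEx : E ⊆ x) :
    E ∈ L T κ {x} x := by
  by_contra hE
  obtain ⟨_, rfl, -, hne⟩ := hL T κ {x} x hQ E hEx hE
  exact hne rfl

lemma feasibility_Ldw : Feasibility Ldw :=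
  fun _ _ _ _ _ _ hE => hE.1

lemma validity_Ldw : Validity Ldw := by
  rintro T κ D x - E hE ⟨y, hy, hEy, hne⟩
  exact hne (hE.2 y hy hEy)

lemma success_Ldw : Success Ldw := by
  intro T κ D x hQ
  refine ⟨x, subset_rfl, fun y hy hxy => ?_⟩
  rw [hQ.isInstance.eq_of_subset (hQ.2.1 hy).1 hxy]

lemma completeness_Ldw : Completeness Ldw := by
  intro T κ D x _ E hEx hE
  by_contra! hvalid
  exact hE ⟨hEx, hvalid⟩

lemma empty_mem_Lw_iff {T : CTheory} {κ : Set (ℕ × ℕ) → ℕ} {D : Set (Set (ℕ × ℕ))}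
    {x : Set (ℕ × ℕ)} : ∅ ∈ Lw T κ D x ↔ ∀ y, IsInstance T y → κ y = κ x :=
  ⟨fun h y hy => h.2 y hy (Set.empty_subset y),
    fun h => ⟨Set.empty_subset x, fun y hy _ => h y hy⟩⟩

lemma feasibility_Lw : Feasibility Lw :=
  fun T κ _ x hQ => feasibility_Ldw T κ (FeatureSpace T) x hQ.featureSpace

lemma validity_Lw : Validity Lw := by
  rintro T κ D x hQ E hE ⟨y, hy, hcounter⟩
  exact validity_Ldw T κ (FeatureSpace T) x hQ.featureSpace E hE ⟨y, hQ.2.1 hy, hcounter⟩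

lemma success_Lw : Success Lw :=
  fun T κ _ x hQ => success_Ldw T κ (FeatureSpace T) x hQ.featureSpace

lemma coherence_Lw : Coherence Lw := by
  intro T κ D x x' hQ hQ' hne E hE E' hE' hcons
  have hpartial : IsPartialAssignment T (E ∪ E') :=
    (hQ.isInstance.1.mono hE.1).union (hQ'.isInstance.1.mono hE'.1) hcons
  obtain ⟨z, hz, hsub⟩ := hpartial.exists_isInstance_superset
  obtain ⟨hEz, hE'z⟩ := Set.union_subset_iff.mp hsub
  exact hne ((hE.2 z hz hEz).symm.trans (hE'.2 z hz hE'z))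

lemma monotonicity_Lw : Monotonicity Lw :=
  fun _ _ _ _ _ _ _ _ => subset_rfl

lemma counterMonotonicity_Lw : CounterMonotonicity Lw :=
  fun _ _ _ _ _ _ _ _ => subset_rfl

lemma strongCompleteness_Lw : StrongCompleteness Lw :=
  fun T κ _ x hQ => completeness_Ldw T κ (FeatureSpace T) x hQ.featureSpace

/-- The theory with one feature, two values and two classes, all numbered from `0`: the smallest
theory whose instances are nonempty, used to refute axioms. -/
def binaryTheory : CTheory where
  F := {0}
  dom := fun _ => {0, 1}
  dom_nontrivial := fun _ _ => by decide
  C := {0, 1}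
  C_nontrivial := by decide

lemma isInstance_binaryTheory {b : ℕ} (hb : b ∈ ({0, 1} : Finset ℕ)) :
    IsInstance binaryTheory {(0, b)} := by
  have hgraph : instanceOfValues binaryTheory (fun _ => b) = {(0, b)} := by
    ext ⟨f, w⟩
    simp [instanceOfValues, binaryTheory]
  exact hgraph ▸ isInstance_instanceOfValues fun _ _ => hb

lemma not_strongIrreducibility_Lw : ¬ StrongIrreducibility Lw := by
  intro hirr
  obtain ⟨c, hc⟩ := exists_isClassifier_const binaryTheory
  have hQ : IsQuestion binaryTheory (fun _ => c) {{(0, 0)}} {(0, 0)} :=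
    hc.isQuestion_singleton (isInstance_binaryTheory (by decide))
  have hmem : {(0, 0)} ∈ Lw binaryTheory (fun _ => c) {{(0, 0)}} {(0, 0)} :=
    ⟨subset_rfl, fun _ _ _ => rfl⟩
  obtain ⟨_, -, hne, -⟩ := hirr _ _ _ _ hQ _ hmem (0, 0) rfl
  exact hne rfl

lemma not_completeness_Lw : ¬ Completeness Lw := by
  intro hcomplete
  have hxy : ({(0, 0)} : Set (ℕ × ℕ)) ≠ {(0, 1)} := by simp
  obtain ⟨κ, hκ, hne⟩ := exists_isClassifier_ne binaryTheory hxy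
  have hQ : IsQuestion binaryTheory κ {{(0, 0)}} {(0, 0)} :=
    hκ.isQuestion_singleton (isInstance_binaryTheory (by decide))
  have hempty := hcomplete.mem_of_dataset_singleton hQ (Set.empty_subset _)
  exact hne (empty_mem_Lw_iff.mp hempty _ (isInstance_binaryTheory (by decide))).symm

theorem Lw_axioms :
    Feasibility Lw ∧ Validity Lw ∧ Success Lw ∧ Coherence Lw ∧
    Monotonicity Lw ∧ CounterMonotonicity Lw ∧ StrongCompleteness Lw ∧
    ¬ Irreducibility Lw ∧ ¬ StrongIrreducibility Lw ∧ ¬ Completeness Lw :=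
  ⟨feasibility_Lw, validity_Lw, success_Lw, coherence_Lw, monotonicity_Lw, counterMonotonicity_Lw,
    strongCompleteness_Lw, fun hirr => not_strongIrreducibility_Lw hirr.strongIrreducibility,
    not_strongIrreducibility_Lw, not_completeness_Lw⟩
end

section
/- If an explainer L satisfies Feasibility, Success and Coherence, then for every question Q = (T, κ, D, x), L(Q) ⊆ L_dw(Q). -/
theorem ConsistentLits.mono_s15 {S S' : Set (ℕ × ℕ)} (hS' : ConsistentLits S') (hSS' : S ⊆ S') :
    ConsistentLits S :=
  fun l hl l' hl' => hS' l (hSS' hl) l' (hSS' hl')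

section Question

variable {T : CTheory} {κ : Set (ℕ × ℕ) → ℕ} {D : Set (Set (ℕ × ℕ))} {x y : Set (ℕ × ℕ)}

theorem IsQuestion.consistentLits (hQ : IsQuestion T κ D x) : ConsistentLits x :=
  have hx : IsInstance T x := hQ.2.1 hQ.2.2
  hx.1.2

theorem IsQuestion.of_mem (hQ : IsQuestion T κ D x) (hy : y ∈ D) : IsQuestion T κ D y :=
  ⟨hQ.1, hQ.2.1, hy⟩

end Question

section Explainer

variable {L : Explainer}

theorem Coherence.validity (hCoh : Coherence L) (hFea : Feasibility L) (hSuc : Success L) :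
    Validity L := by
  rintro T κ D x hQx E hE ⟨y, hyD, hEy, hne⟩
  have hQy : IsQuestion T κ D y := hQx.of_mem hyD
  obtain ⟨E', hE'⟩ := hSuc T κ D y hQy
  have hE'y : E' ⊆ y := hFea T κ D y hQy E' hE'
  have hcons : ConsistentLits (E ∪ E') := hQy.consistentLits.mono_s15 (Set.union_subset hEy hE'y)
  exact hCoh T κ D x y hQx hQy hne.symm E hE E' hE' hcons

theorem Validity.subset_Ldw (hVal : Validity L) (hFea : Feasibility L) {T : CTheory}
    {κ : Set (ℕ × ℕ) → ℕ} {D : Set (Set (ℕ × ℕ))} {x : Set (ℕ × ℕ)} (hQ : IsQuestion T κ D x) :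
    L T κ D x ⊆ Ldw T κ D x := by
  intro E hE
  refine ⟨hFea T κ D x hQ E hE, fun y hyD hEy => ?_⟩
  by_contra hne
  exact hVal T κ D x hQ E hE ⟨y, hyD, hEy, hne⟩

end Explainer

theorem feasibility_success_coherence_imply_subset_Ldw (L : Explainer)
    (hL : IsExplainer L) (hFea : Feasibility L) (hSuc : Success L) (hCoh : Coherence L) :
    ∀ T κ D x, IsQuestion T κ D x → L T κ D x ⊆ Ldw T κ D x := by
  intro T κ D x hQ
  have hVal : Validity L := hCoh.validity hFea hSuc
  exact hVal.subset_Ldw hFea hQ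
end
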